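/- Let d ≥ 1, ω = exp(2πi/d), Z|j⟩ = |j⊕1⟩, W|j⟩ = ω^j|j⟩, and U_{pq} = Z^p W^q for p, q ∈ ℤ_d. Let ψ ∈ ℂ^d be a unit vector such that Tr(U_{pq}^† ψψ^†) ≠ 0 for all p, q ∈ ℤ_d. Then the family P_{(p,q)} = (1/d) U_{pq} (ψψ^†) U_{pq}^†, indexed by ℤ_d × ℤ_d, is a POVM on ℂ^d with d² rank-one elements, its elements are linearly independent over ℂ and span M_d(ℂ) (so it is informationally complete), and it is an extremal POVM. -/

import Mathlib

/-!
Everything about the family `U_{pq} A U_{pq}†` follows from one identity: weighting its members by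
the character `(p, q) ↦ χ(s p - q r)`, where `χ(x) = ω ^ x`, and summing gives
`d Tr(U_{rs}† A) U_{rs}`. For `r = s = 0` this says that the family sums to `d Tr(A) 1`. For general
`(r, s)` it puts `U_{rs}` into the span of the family as soon as `Tr(U_{rs}† A) ≠ 0`; as the
`U_{rs}` span all matrices, so does the family, and its `d²` members are then linearly independent
by counting dimensions.

For extremality, suppose that a POVM `P` with elements of rank one is a proper convex combination
of `Q` and `R`. Each `Q_e` is dominated by a multiple of `P_e`, hence proportional to it, and
`∑ Q_e = 1 = ∑ P_e` together with linear independence makes every factor equal to one.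
-/

open Matrix
open scoped ComplexOrder

/-- A POVM with finite outcome set `E` on the Hilbert space `ℂ^n` (here the
Hilbert-space dimension is indexed by an arbitrary finite type `n`). -/
def IsPOVM {n : Type*} [Fintype n] [DecidableEq n] {E : Type*} [Fintype E]
    (P : E → Matrix n n ℂ) : Prop :=
  (∀ e, (P e).PosSemidef) ∧ ∑ e, P e = 1

/-- A POVM is extremal if it is an extreme point of the convex set of POVMs. -/
def IsExtremalPOVM {n : Type*} [Fintype n] [DecidableEq n] {E : Type*} [Fintype E]
    (P : E → Matrix n n ℂ) : Prop :=
  P ∈ Set.extremePoints ℝ {Q : E → Matrix n n ℂ | IsPOVM Q}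

/-- The cyclic shift matrix `Z` on `ℂ^d`: `Z|j⟩ = |j ⊕ 1⟩` (addition mod `d`). -/
noncomputable def shiftMat (d : ℕ) [NeZero d] : Matrix (ZMod d) (ZMod d) ℂ :=
  Matrix.of fun i j : ZMod d => if i = j + 1 then (1 : ℂ) else 0

/-- The phase multiplication matrix `W` on `ℂ^d`: `W|j⟩ = ω^j |j⟩` with `ω = exp(2πi/d)`. -/
noncomputable def multMat (d : ℕ) [NeZero d] : Matrix (ZMod d) (ZMod d) ℂ :=
  Matrix.diagonal fun j : ZMod d => Complex.exp (2 * Real.pi * Complex.I / d) ^ j.val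

/-- The shift-and-multiply unitaries `U_{pq} = Z^p W^q`. -/
noncomputable def shiftMult (d : ℕ) [NeZero d] (p q : ZMod d) : Matrix (ZMod d) (ZMod d) ℂ :=
  shiftMat d ^ p.val * multMat d ^ q.val

section RankOne

variable {n : Type*} [Fintype n]

lemma matrix_rank_eq_zero_iff {m K : Type*} [Field K] {A : Matrix m n K} :
    A.rank = 0 ↔ A = 0 := by
  classical
  rw [Matrix.rank, Submodule.finrank_eq_zero, LinearMap.range_eq_bot, ← Matrix.toLin'_apply',
    LinearEquiv.map_eq_zero_iff]

lemma exists_eq_smul_of_finrank_range_le_one {K V W : Type*} [Field K]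
    [AddCommGroup V] [Module K V] [AddCommGroup W] [Module K W] [FiniteDimensional K W]
    {f g : V →ₗ[K] W} (hrank : Module.finrank K (LinearMap.range f) ≤ 1)
    (hker : LinearMap.ker f ≤ LinearMap.ker g) (hrange : LinearMap.range g ≤ LinearMap.range f) :
    ∃ c : K, g = c • f := by
  obtain ⟨⟨_, x₀, rfl⟩, hspan⟩ := finrank_le_one_iff.1 hrank
  have hf (y : W) (hy : y ∈ LinearMap.range f) : ∃ a : K, a • f x₀ = y :=
    (hspan ⟨y, hy⟩).imp fun _ => congrArg Subtype.val
  obtain ⟨c, hc⟩ := hf (g x₀) (hrange ⟨x₀, rfl⟩)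
  refine ⟨c, LinearMap.ext fun x => ?_⟩
  obtain ⟨a, ha⟩ := hf (f x) ⟨x, rfl⟩
  have hx : g (x - a • x₀) = 0 := hker (by simp [ha])
  calc g x = a • g x₀ := by simpa [sub_eq_zero] using hx
    _ = c • f x := by rw [← hc, ← ha, smul_comm]

variable {𝕜 : Type*} [RCLike 𝕜] {A B : Matrix n n 𝕜}

lemma mulVec_eq_zero_of_posSemidef_sub (hA : A.PosSemidef) (hAB : (B - A).PosSemidef)
    {x : n → 𝕜} (hx : B *ᵥ x = 0) : A *ᵥ x = 0 := by
  refine (hA.dotProduct_mulVec_zero_iff x).1 (le_antisymm ?_ (hA.dotProduct_mulVec_nonneg x))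
  simpa [sub_mulVec, hx] using hAB.dotProduct_mulVec_nonneg x

lemma exists_eq_smul_of_posSemidef_sub (hA : A.PosSemidef) (hAB : (B - A).PosSemidef)
    (hrank : B.rank ≤ 1) : ∃ c : 𝕜, A = c • B := by
  classical
  have hB : B.PosSemidef := by simpa using hAB.add hA
  have hker : LinearMap.ker B.toEuclideanLin ≤ LinearMap.ker A.toEuclideanLin := fun x hx => by
    have hBx : B *ᵥ x.ofLp = 0 := congrArg WithLp.ofLp hx
    exact congrArg (WithLp.toLp 2) (mulVec_eq_zero_of_posSemidef_sub hA hAB hBx)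
  have hrange : LinearMap.range A.toEuclideanLin ≤ LinearMap.range B.toEuclideanLin := by
    rw [← Submodule.orthogonal_le_orthogonal_iff,
      (isSymmetric_toEuclideanLin_iff.2 hA.isHermitian).orthogonal_range,
      (isSymmetric_toEuclideanLin_iff.2 hB.isHermitian).orthogonal_range]
    exact hker
  rw [B.rank_eq_finrank_range_toLin (EuclideanSpace.basisFun n 𝕜).toBasis
    (EuclideanSpace.basisFun n 𝕜).toBasis, ← toEuclideanLin_eq_toLin_orthonormal] at hrank
  obtain ⟨c, hc⟩ := exists_eq_smul_of_finrank_range_le_one hrank hker hrange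
  exact ⟨c, toEuclideanLin.injective (by rw [hc, map_smul])⟩

end RankOne

theorem IsPOVM.isExtremalPOVM_of_rank_le_one {n E : Type*} [Fintype n] [DecidableEq n] [Fintype E]
    {P : E → Matrix n n ℂ} (hP : IsPOVM P) (hrank : ∀ e, (P e).rank ≤ 1)
    (hli : LinearIndependent ℂ P) : IsExtremalPOVM P := by
  refine mem_extremePoints_iff_left.2 ⟨hP, ?_⟩
  rintro Q ⟨hQ, hQsum⟩ R ⟨hR, -⟩ ⟨a, b, ha, hb, -, hab⟩
  have hprop (e : E) : ∃ c : ℂ, Q e = c • P e := by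
    have hsub : P e - a • Q e = b • R e := by simp [← hab]
    obtain ⟨c, hc⟩ := exists_eq_smul_of_posSemidef_sub ((hQ e).smul ha.le)
      (hsub ▸ (hR e).smul hb.le) (hrank e)
    exact ⟨(a : ℂ)⁻¹ * c, by
      rw [mul_smul, ← hc, ← Complex.coe_smul, inv_smul_smul₀ (by exact_mod_cast ha.ne')]⟩
  choose c hc using hprop
  have hrel : ∑ e, (c e - 1) • P e = 0 := by
    simp only [sub_smul, one_smul, Finset.sum_sub_distrib, ← hc, hQsum, hP.2, sub_self]
  have hc1 (e : E) : c e = 1 := sub_eq_zero.1 (Fintype.linearIndependent_iff.1 hli _ hrel e)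
  funext e
  rw [hc, hc1, one_smul]

section ShiftMult

open ZMod

variable (d : ℕ) [NeZero d]

lemma multMat_eq_diagonal_stdAddChar :
    multMat d = diagonal fun j : ZMod d => stdAddChar j := by
  refine congrArg diagonal (funext fun j => ?_)
  rw [stdAddChar_apply, toCircle_apply, ← Complex.exp_nat_mul]
  congr 1
  ring

lemma shiftMat_pow_apply (m : ℕ) (i j : ZMod d) :
    (shiftMat d ^ m) i j = if i = j + m then 1 else 0 := by
  induction m generalizing j with
  | zero => simp [one_apply]
  | succ m ih =>
    have hshift (k : ZMod d) : shiftMat d k j = if k = j + 1 then 1 else 0 := rfl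
    simp [pow_succ, mul_apply, ih, hshift, add_assoc, add_comm (1 : ZMod d)]

variable {d}

lemma shiftMult_apply (p q i j : ZMod d) :
    shiftMult d p q i j = if i = j + p then stdAddChar (q * j) else 0 := by
  have hpow : (stdAddChar j : ℂ) ^ q.val = stdAddChar (q * j) := by
    rw [← AddChar.map_nsmul_eq_pow, nsmul_eq_mul, natCast_zmod_val]
  simp [shiftMult, multMat_eq_diagonal_stdAddChar, diagonal_pow, mul_diagonal, shiftMat_pow_apply,
    hpow]

lemma shiftMult_zero_zero : shiftMult d 0 0 = 1 := by
  simp [shiftMult]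

lemma trace_conjTranspose_shiftMult_mul (p q : ZMod d) (A : Matrix (ZMod d) (ZMod d) ℂ) :
    ((shiftMult d p q)ᴴ * A).trace = ∑ j, stdAddChar (-(q * j)) * A (j + p) j := by
  simp [trace, mul_apply, shiftMult_apply, AddChar.map_neg_eq_conj, apply_ite]

lemma sum_stdAddChar_mul (a : ZMod d) :
    ∑ x : ZMod d, (stdAddChar (x * a) : ℂ) = if a = 0 then (d : ℂ) else 0 := by
  simpa using AddChar.sum_mulShift a (isPrimitive_stdAddChar d)

lemma sum_stdAddChar_smul_shiftMult (p j : ZMod d) :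
    ∑ q, (stdAddChar (-(q * j)) : ℂ) • shiftMult d p q = (d : ℂ) • single (j + p) j 1 := by
  ext k l
  have hchar (q : ZMod d) :
      (stdAddChar (-(q * j)) * stdAddChar (q * l) : ℂ) = stdAddChar (q * (l - j)) := by
    rw [← AddChar.map_add_eq_mul]
    ring_nf
  simp only [Matrix.sum_apply, Matrix.smul_apply, shiftMult_apply, smul_eq_mul, mul_ite, mul_zero,
    hchar]
  by_cases hl : j = l
  · simp [hl, single_apply, eq_comm]
  · simp [hl, Ne.symm hl, sum_stdAddChar_mul, sub_eq_zero, Finset.sum_ite_irrel]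

lemma span_range_shiftMult :
    Submodule.span ℂ (Set.range fun e : ZMod d × ZMod d => shiftMult d e.1 e.2) = ⊤ := by
  rw [eq_top_iff, ← (stdBasis ℂ (ZMod d) (ZMod d)).span_eq, Submodule.span_le]
  rintro _ ⟨⟨i, j⟩, rfl⟩
  have hd : (d : ℂ) ≠ 0 := NeZero.ne _
  have hsum := sum_stdAddChar_smul_shiftMult (i - j) j
  rw [add_sub_cancel] at hsum
  rw [stdBasis_eq_single, SetLike.mem_coe, ← Submodule.smul_mem_iff _ hd, ← hsum]
  exact Submodule.sum_mem _ fun q _ =>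
    Submodule.smul_mem _ _ (Submodule.subset_span ⟨(i - j, q), rfl⟩)

variable (d) in
/-- The orbit of `A` under conjugation by the shift-and-multiply unitaries, as a family indexed by
`(p, q)`. For `A = ψψ†/d` it is the covariant measurement generated by `ψ`. -/
noncomputable def shiftMultOrbit (A : Matrix (ZMod d) (ZMod d) ℂ) (e : ZMod d × ZMod d) :
    Matrix (ZMod d) (ZMod d) ℂ :=
  shiftMult d e.1 e.2 * A * (shiftMult d e.1 e.2)ᴴ

variable {A : Matrix (ZMod d) (ZMod d) ℂ}

lemma shiftMultOrbit_apply (A : Matrix (ZMod d) (ZMod d) ℂ) (p q i k : ZMod d) :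
    shiftMultOrbit d A (p, q) i k = stdAddChar (q * (i - k)) * A (i - p) (k - p) := by
  have hchar : (stdAddChar (q * (i - k)) : ℂ) =
      stdAddChar (q * (i - p)) * star (stdAddChar (q * (k - p)) : ℂ) := by
    rw [Complex.star_def, ← AddChar.map_neg_eq_conj, ← AddChar.map_add_eq_mul]
    ring_nf
  simp only [shiftMultOrbit, mul_apply, shiftMult_apply, ← sub_eq_iff_eq_add, ite_mul, zero_mul,
    Finset.sum_ite_eq, Finset.mem_univ, ↓reduceIte, conjTranspose_apply, apply_ite star,
    RCLike.star_def, star_zero, mul_ite, mul_zero, hchar]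
  ring

theorem sum_stdAddChar_smul_shiftMultOrbit (A : Matrix (ZMod d) (ZMod d) ℂ) (r s : ZMod d) :
    ∑ e : ZMod d × ZMod d, (stdAddChar (s * e.1 - e.2 * r) : ℂ) • shiftMultOrbit d A e =
      (d * ((shiftMult d r s)ᴴ * A).trace) • shiftMult d r s := by
  ext i k
  have hchar (p q : ZMod d) : (stdAddChar (s * p - q * r) * stdAddChar (q * (i - k)) : ℂ) =
      stdAddChar (s * p) * stdAddChar (q * (i - k - r)) := by
    rw [← AddChar.map_add_eq_mul, ← AddChar.map_add_eq_mul]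
    ring_nf
  have hentry : (∑ e : ZMod d × ZMod d,
      (stdAddChar (s * e.1 - e.2 * r) : ℂ) • shiftMultOrbit d A e) i k =
        (∑ p, stdAddChar (s * p) * A (i - p) (k - p)) * ∑ q, stdAddChar (q * (i - k - r)) := by
    simp only [Matrix.sum_apply, Matrix.smul_apply, smul_eq_mul, Fintype.sum_prod_type,
      shiftMultOrbit_apply, ← mul_assoc, hchar, Finset.sum_mul_sum]
    simp only [mul_right_comm]
  rw [hentry, sum_stdAddChar_mul, Matrix.smul_apply, shiftMult_apply, smul_eq_mul]
  by_cases hik : i = k + r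
  · have htrace : ∑ p, stdAddChar (s * p) * A (i - p) (k - p) =
        stdAddChar (s * k) * ((shiftMult d r s)ᴴ * A).trace := by
      rw [trace_conjTranspose_shiftMult_mul, Finset.mul_sum, ← (Equiv.subLeft k).sum_comp]
      refine Finset.sum_congr rfl fun j _ => ?_
      rw [Equiv.subLeft_apply, ← mul_assoc, ← AddChar.map_add_eq_mul, hik]
      ring_nf
    rw [htrace, if_pos hik, if_pos (by rw [hik]; ring)]
    ring
  · rw [if_neg hik, if_neg (by rwa [sub_sub, sub_eq_zero]), mul_zero, mul_zero]

lemma sum_shiftMultOrbit (A : Matrix (ZMod d) (ZMod d) ℂ) :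
    ∑ e, shiftMultOrbit d A e = (d * A.trace) • 1 := by
  simpa [shiftMult_zero_zero] using sum_stdAddChar_smul_shiftMultOrbit A 0 0

theorem isPOVM_shiftMultOrbit (hA : A.PosSemidef) (htr : A.trace = (d : ℂ)⁻¹) :
    IsPOVM (shiftMultOrbit d A) := by
  refine ⟨fun e => hA.mul_mul_conjTranspose_same _, ?_⟩
  rw [sum_shiftMultOrbit, htr, mul_inv_cancel₀ (NeZero.ne _), one_smul]

theorem span_range_shiftMultOrbit (hA : ∀ r s, ((shiftMult d r s)ᴴ * A).trace ≠ 0) :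
    Submodule.span ℂ (Set.range (shiftMultOrbit d A)) = ⊤ := by
  rw [eq_top_iff, ← span_range_shiftMult, Submodule.span_le]
  rintro _ ⟨⟨r, s⟩, rfl⟩
  have hne : d * ((shiftMult d r s)ᴴ * A).trace ≠ 0 := mul_ne_zero (NeZero.ne _) (hA r s)
  refine (Submodule.smul_mem_iff _ hne).1 ?_
  rw [← sum_stdAddChar_smul_shiftMultOrbit]
  exact Submodule.sum_mem _ fun e _ =>
    Submodule.smul_mem _ _ (Submodule.subset_span (Set.mem_range_self e))

theorem linearIndependent_shiftMultOrbit (hA : ∀ r s, ((shiftMult d r s)ᴴ * A).trace ≠ 0) :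
    LinearIndependent ℂ (shiftMultOrbit d A) :=
  linearIndependent_of_top_le_span_of_card_eq_finrank (span_range_shiftMultOrbit hA).ge
    (by simp [Module.finrank_matrix])

lemma rank_shiftMultOrbit_le (A : Matrix (ZMod d) (ZMod d) ℂ) (e : ZMod d × ZMod d) :
    (shiftMultOrbit d A e).rank ≤ A.rank :=
  (rank_mul_le_left _ _).trans (rank_mul_le_right _ _)

end ShiftMult

theorem stmt16 (d : ℕ) [NeZero d] (ψ : ZMod d → ℂ) (hψ : star ψ ⬝ᵥ ψ = 1)
    (hcond : ∀ p q : ZMod d,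
      ((shiftMult d p q)ᴴ * vecMulVec ψ (star ψ)).trace ≠ 0)
    (P : ZMod d × ZMod d → Matrix (ZMod d) (ZMod d) ℂ)
    (hPdef : ∀ pq : ZMod d × ZMod d, P pq = (d : ℂ)⁻¹ •
      (shiftMult d pq.1 pq.2 * vecMulVec ψ (star ψ) * (shiftMult d pq.1 pq.2)ᴴ)) :
    IsPOVM P ∧ (∀ pq, (P pq).rank = 1) ∧ LinearIndependent ℂ P ∧
      Submodule.span ℂ (Set.range P) = ⊤ ∧ IsExtremalPOVM P := by
  set A : Matrix (ZMod d) (ZMod d) ℂ := (d : ℂ)⁻¹ • vecMulVec ψ (star ψ) with hA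
  obtain rfl : P = shiftMultOrbit d A := funext fun e => by
    rw [hPdef, shiftMultOrbit, hA, Matrix.mul_smul, Matrix.smul_mul]
  have hpsd : A.PosSemidef := (posSemidef_vecMulVec_self_star ψ).smul (by positivity)
  have htrace : A.trace = (d : ℂ)⁻¹ := by
    rw [hA, trace_smul, trace_vecMulVec, dotProduct_comm, hψ, smul_eq_mul, mul_one]
  have hne (p q : ZMod d) : ((shiftMult d p q)ᴴ * A).trace ≠ 0 := by
    rw [hA, Matrix.mul_smul, trace_smul]
    exact smul_ne_zero (inv_ne_zero (NeZero.ne _)) (hcond p q)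
  have hpovm := isPOVM_shiftMultOrbit hpsd htrace
  have hli := linearIndependent_shiftMultOrbit hne
  have hrank (e) : (shiftMultOrbit d A e).rank ≤ 1 :=
    (rank_shiftMultOrbit_le A e).trans (by rw [hA, ← smul_vecMulVec]; exact rank_vecMulVec_le _ _)
  have hrank_ne (e) : (shiftMultOrbit d A e).rank ≠ 0 :=
    mt matrix_rank_eq_zero_iff.1 (hli.ne_zero e)
  exact ⟨hpovm, fun e => (hrank e).antisymm (Nat.one_le_iff_ne_zero.2 (hrank_ne e)), hli,
    span_range_shiftMultOrbit hne, hpovm.isExtremalPOVM_of_rank_le_one hrank hli⟩
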